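/- Define R_t^N(α) := Q_t^N(α)/((Q_0^N(α))^{1−t}·(Q_1^N(α))^{t}). There exists a constant C > 0 such that 1/C ≤ R_t^N(α) ≤ C for every integer N ≥ 1, every t ∈ [0,1], and every α ∈ [0,1]; moreover R_t^N(α) → Ω_t(α)/((Ω_0(α))^{1−t}·(Ω_1(α))^{t}) as N → ∞, uniformly in (t,α) ∈ [0,1] × [0,1]. -/

import Mathlib

open Set Filter

noncomputable def GP : ℝ → ℝ := fun x => x * Real.log x + (1 - x) * Real.log (1 - x)

noncomputable def Gt (f0 f1 : ℝ → ℝ) (t : ℝ) : ℝ → ℝ :=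
  fun x => GP x + ((1 - t) * f0 x + t * f1 x)

noncomputable def Phase (G : ℝ → ℝ) (α : ℝ) : ℝ → ℝ :=
  fun x => (x - α) * deriv G x - (G x - G α)

noncomputable def Qnorm (G : ℝ → ℝ) (N : ℕ) (α : ℝ) : ℝ :=
  2 * Real.pi * ∫ x in (0:ℝ)..1, Real.exp (-(N : ℝ) * Phase G α x)

noncomputable def RPhase (G : ℝ → ℝ) (α : ℝ) : ℝ → ℝ :=
  fun y => (1 / α) * Phase G α (α * (1 + y))

noncomputable def Leg (G : ℝ → ℝ) (S : Set ℝ) : ℝ → ℝ :=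
  fun ρ => sSup ((fun x => x * ρ - G x) '' S)

noncomputable def QQ (G : ℝ → ℝ) (N : ℕ) (α : ℝ) : ℝ :=
  Qnorm G N α * Real.exp ((N : ℝ) * G α)

noncomputable def Omg (f0 f1 : ℝ → ℝ) (t α : ℝ) : ℝ :=
  if α = 0 ∨ α = 1 then 1
  else (iteratedDeriv 2 GP α / iteratedDeriv 2 (Gt f0 f1 t) α) ^ ((1:ℝ)/2)

noncomputable def Rcal (f0 f1 : ℝ → ℝ) (N : ℕ) (t α : ℝ) : ℝ :=
  Qnorm (Gt f0 f1 t) N α /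
    ((Qnorm (Gt f0 f1 0) N α) ^ (1 - t) * (Qnorm (Gt f0 f1 1) N α) ^ t)

/-!
Put `D = Phase GP α`, the phase of the model potential, and let `H = 1 + x (1 - x) f''` be the
quotient `(GP + f)'' / GP''`, which is continuous and positive on the closed interval `[0, 1]`.
Since the phase of `G` has derivative `(x - α) G''`, Cauchy's mean value theorem gives
`Phase (GP + f) α x = H ξ * D x` for some `ξ` between `α` and `x`. Hence `∫ e^{-N Phase (GP + f) α}`
lies between two integrals `∫ e^{-c N D}`, and these are comparable to `∫ e^{-N D}` uniformly in `N`
and `α` because `D` is convex with minimum `0` at `α`. The quotient of the two integrals tends to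
`1 / √(H a)` as `N → ∞` and `α → a`: for `0 < a < 1` by Laplace's method, where
`Phase (GP + f) α x ≥ 2 m (x - α) ^ 2` with `m = min H` provides a Gaussian majorant; for
`a ∈ {0, 1}` because `H` is close to `1` near the endpoints. All bounds are uniform in the
perturbations `f = (1 - t) f0 + t f1`, and a limit taken jointly in `N`, `t` and `α` is, by
compactness of the square and continuity of the limit, uniform in `(t, α)`.
-/

open Topology MeasureTheory unitInterval

section Calculus

theorem exists_mem_uIoo_ratio_hasDerivAt_eq_ratio_slope {f f' g g' : ℝ → ℝ} {a b : ℝ}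
    (hab : a ≠ b) (hfc : ContinuousOn f (uIcc a b)) (hgc : ContinuousOn g (uIcc a b))
    (hf : ∀ x ∈ uIoo a b, HasDerivAt f (f' x) x) (hg : ∀ x ∈ uIoo a b, HasDerivAt g (g' x) x) :
    ∃ c ∈ uIoo a b, (f b - f a) * g' c = (g b - g a) * f' c := by
  rcases hab.lt_or_gt with h | h
  · rw [uIcc_of_le h.le] at hfc hgc
    rw [uIoo_of_le h.le] at hf hg ⊢
    obtain ⟨c, hc, hcc⟩ := exists_ratio_hasDerivAt_eq_ratio_slope g g' h hgc hg f f' hfc hf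
    exact ⟨c, hc, hcc⟩
  · rw [uIcc_of_ge h.le] at hfc hgc
    rw [uIoo_of_ge h.le] at hf hg ⊢
    obtain ⟨c, hc, hcc⟩ := exists_ratio_hasDerivAt_eq_ratio_slope g g' h hgc hg f f' hfc hf
    exact ⟨c, hc, by linear_combination -hcc⟩

theorem uIcc_subset_insert_Ioo {R : Type*} [LinearOrder R] {a b y z : R} (hy : y ∈ Icc a b)
    (hz : z ∈ Ioo a b) :
    uIcc y z ⊆ insert y (Ioo a b) := by
  intro w hw
  rcases eq_or_ne w y with rfl | hwy
  · exact mem_insert _ _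
  rcases mem_uIcc.1 hw with ⟨h1, h2⟩ | ⟨h1, h2⟩
  · exact Or.inr ⟨hy.1.trans_lt (h1.lt_of_ne hwy.symm), h2.trans_lt hz.2⟩
  · exact Or.inr ⟨hz.1.trans_le h1, (h2.lt_of_ne hwy).trans_le hy.2⟩

theorem mul_one_sub_le_add_abs {a x : ℝ} (ha : a ∈ Icc (0 : ℝ) 1) (hx : x ∈ Icc (0 : ℝ) 1) :
    x * (1 - x) ≤ a * (1 - a) + |x - a| := by
  have h : |1 - x - a| ≤ 1 := abs_le.2 ⟨by linarith [ha.2, hx.2], by linarith [ha.1, hx.1]⟩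
  have h' : (x - a) * (1 - x - a) ≤ |x - a| :=
    (le_abs_self _).trans ((abs_mul _ _).trans_le (mul_le_of_le_one_right (abs_nonneg _) h))
  linarith

theorem abs_exp_neg_sub_exp_neg_le {a b c : ℝ} (ha : c ≤ a) (hb : c ≤ b) :
    |Real.exp (-a) - Real.exp (-b)| ≤ Real.exp (-c) * |a - b| := by
  have h : ∀ x ∈ Ici c, ‖-Real.exp (-x)‖ ≤ Real.exp (-c) := fun x (hx : c ≤ x) => by
    rw [norm_neg, Real.norm_of_nonneg (Real.exp_pos _).le]
    gcongr
  simpa using (convex_Ici c).norm_image_sub_le_of_norm_hasDerivWithin_le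
    (fun x _ => by simpa using (hasDerivAt_neg x).exp.hasDerivWithinAt) h hb ha

theorem continuousAt_mul_log (a : ℝ) : ContinuousAt (fun x => a * Real.log x) a := by
  rcases eq_or_ne a 0 with rfl | ha
  · simpa using continuousAt_const
  · exact continuousAt_const.mul (Real.continuousAt_log ha)

theorem mul_one_add_le_exp {m u : ℝ} (hm : 0 < m) (hm1 : m ≤ 1) (hu : 0 ≤ u) :
    u * (1 + u) ≤ 8 / m ^ 2 * Real.exp (m * u / 2) := by
  have h := Real.quadratic_le_exp_of_nonneg (x := m * u / 2) (by positivity)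
  calc u * (1 + u) ≤ 8 / m ^ 2 * (1 + m * u / 2 + (m * u / 2) ^ 2 / 2) := by
        rw [div_mul_eq_mul_div, le_div_iff₀ (by positivity)]
        nlinarith [mul_nonneg (mul_nonneg hm.le hu) (sub_nonneg.2 hm1), mul_nonneg hm.le hu]
    _ ≤ _ := by gcongr

theorem le_one_add_mul_sq_div {l d : ℝ} (hl : 0 < l) :
    d ≤ (1 + l * d ^ 2) / √l := by
  rw [le_div_iff₀ (Real.sqrt_pos.2 hl)]
  nlinarith [Real.sq_sqrt hl.le, sq_nonneg (√l * d - 1), sq_nonneg (√l * d)]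

theorem tendsto_of_mem_uIcc {ι R : Type*} [LinearOrder R] [TopologicalSpace R] [OrderTopology R]
    {p : Filter ι} {a : R} {ξ x y : ι → R} (hx : Tendsto x p (𝓝 a)) (hy : Tendsto y p (𝓝 a))
    (h : ∀ᶠ i in p, ξ i ∈ uIcc (x i) (y i)) : Tendsto ξ p (𝓝 a) := by
  have hmin : Tendsto (fun i => min (x i) (y i)) p (𝓝 a) := by simpa using hx.min hy
  have hmax : Tendsto (fun i => max (x i) (y i)) p (𝓝 a) := by simpa using hx.max hy
  exact tendsto_of_tendsto_of_tendsto_of_le_of_le' hmin hmax (h.mono fun _ hi => hi.1)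
    (h.mono fun _ hi => hi.2)

theorem tendstoUniformly_of_forall_tendsto_prod {ι X Y : Type*} [TopologicalSpace X]
    [CompactSpace X] [UniformSpace Y] {p : Filter ι} {F : ι → X → Y} {g : X → Y} (hg : Continuous g)
    (h : ∀ x, Tendsto (fun q : ι × X => F q.1 q.2) (p ×ˢ 𝓝 x) (𝓝 (g x))) :
    TendstoUniformly F g p := by
  rw [← tendstoLocallyUniformly_iff_tendstoUniformly_of_compactSpace,
    tendstoLocallyUniformly_iff_forall_tendsto]
  intro x
  exact ((hg.tendsto x).comp tendsto_snd |>.prodMk_nhds (h x)).mono_right (nhds_le_uniformity _)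

theorem le_rpow_mul_rpow_of_le {a x y t : ℝ} (ha : 0 < a) (hx : a ≤ x) (hy : a ≤ y)
    (ht : t ∈ Icc (0 : ℝ) 1) : a ≤ x ^ (1 - t) * y ^ t := by
  have h1 : 0 ≤ 1 - t := sub_nonneg.2 ht.2
  have hx0 : 0 < x := ha.trans_le hx
  calc a = a ^ (1 - t) * a ^ t := by rw [← Real.rpow_add ha]; simp
    _ ≤ _ := by gcongr; exact ht.1

theorem rpow_mul_rpow_le_of_le {b x y t : ℝ} (hx : 0 ≤ x) (hy : 0 < y) (hxb : x ≤ b) (hyb : y ≤ b)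
    (ht : t ∈ Icc (0 : ℝ) 1) : x ^ (1 - t) * y ^ t ≤ b := by
  have h1 : 0 ≤ 1 - t := sub_nonneg.2 ht.2
  have hb : 0 < b := hy.trans_le hyb
  calc x ^ (1 - t) * y ^ t ≤ b ^ (1 - t) * b ^ t := by gcongr; exact ht.1
    _ = b := by rw [← Real.rpow_add hb]; simp

end Calculus

section Entropy

theorem GP_eq_neg_binEntropy : GP = -Real.binEntropy := by
  ext x
  simp only [GP, Pi.neg_apply, Real.binEntropy, Real.log_inv]
  ring

theorem measurable_GP : Measurable GP := by
  unfold GP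
  fun_prop

theorem deriv_GP (x : ℝ) : deriv GP x = Real.log x - Real.log (1 - x) := by
  rw [GP_eq_neg_binEntropy, deriv.neg, Real.deriv_binEntropy]
  ring

theorem iteratedDeriv_two_GP (x : ℝ) : iteratedDeriv 2 GP x = 1 / (x * (1 - x)) := by
  rw [GP_eq_neg_binEntropy, iteratedDeriv_neg, iteratedDeriv_eq_iterate, Real.deriv2_binEntropy]
  ring

theorem contDiffAt_GP {x : ℝ} (hx : x ∈ Ioo (0 : ℝ) 1) {n : WithTop ℕ∞} : ContDiffAt ℝ n GP x := by
  have h0 : x ≠ 0 := hx.1.ne'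
  have h1 : 1 - x ≠ 0 := (sub_pos.2 hx.2).ne'
  have hs : ContDiffAt ℝ n (fun y : ℝ => 1 - y) x := contDiffAt_const.sub contDiffAt_id
  exact (contDiffAt_id.mul (Real.contDiffAt_log.2 h0)).add (hs.mul (hs.log h1))

theorem Phase_GP (α x : ℝ) :
    Phase GP α x = GP α - α * Real.log x - (1 - α) * Real.log (1 - x) := by
  simp only [Phase, deriv_GP, GP]
  ring

theorem continuousAt_Phase_GP (α : ℝ) : ContinuousAt (Phase GP α) α := by
  rw [funext (Phase_GP α)]
  have h : ContinuousAt (fun x => (1 - α) * Real.log (1 - x)) α :=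
    (continuousAt_mul_log (1 - α)).comp (f := fun x => 1 - x) (by fun_prop)
  exact (continuousAt_const.sub (continuousAt_mul_log α)).sub h

theorem mul_log_combo_ge {a x u : ℝ} (ha : 0 ≤ a) (hx : 0 < x) (hu : u ∈ Icc (0 : ℝ) 1) :
    (1 - u) * (a * Real.log a) + u * (a * Real.log x) ≤ a * Real.log ((1 - u) * a + u * x) := by
  rcases ha.eq_or_lt with rfl | ha
  · simp
  · have h := strictConcaveOn_log_Ioi.concaveOn.2 ha hx (sub_nonneg.2 hu.2) hu.1 (by ring)
    simp only [smul_eq_mul] at h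
    nlinarith

theorem Phase_GP_combo_le {α x u : ℝ} (hα : α ∈ Icc (0 : ℝ) 1) (hx : x ∈ Ioo (0 : ℝ) 1)
    (hu : u ∈ Icc (0 : ℝ) 1) :
    Phase GP α ((1 - u) * α + u * x) ≤ u * Phase GP α x := by
  have h1 := mul_log_combo_ge hα.1 hx.1 hu
  have h2 := mul_log_combo_ge (sub_nonneg.2 hα.2) (sub_pos.2 hx.2) hu
  rw [show (1 - u) * (1 - α) + u * (1 - x) = 1 - ((1 - u) * α + u * x) by ring] at h2
  rw [Phase_GP, Phase_GP, GP]
  linarith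

end Entropy

section Phase

theorem Phase_self (G : ℝ → ℝ) (α : ℝ) : Phase G α α = 0 := by simp [Phase]

theorem measurable_Phase {G : ℝ → ℝ} (hG : Measurable G) (α : ℝ) : Measurable (Phase G α) :=
  ((measurable_id.sub_const α).mul (measurable_deriv G)).sub (hG.sub_const _)

theorem hasDerivAt_Phase {G : ℝ → ℝ} {α x : ℝ} (hG : ContDiffAt ℝ 2 G x) :
    HasDerivAt (Phase G α) ((x - α) * iteratedDeriv 2 G x) x := by
  have h1 : HasDerivAt G (deriv G x) x := (hG.differentiableAt two_ne_zero).hasDerivAt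
  have h2 : HasDerivAt (deriv G) (iteratedDeriv 2 G x) x := by
    rw [iteratedDeriv_succ, iteratedDeriv_one]
    have h := (hG.contDiffWithinAt (s := univ)).differentiableWithinAt_iteratedDerivWithin
      (m := 1) (by norm_num) (by simp [uniqueDiffOn_univ])
    rw [iteratedDerivWithin_univ, iteratedDeriv_one, differentiableWithinAt_univ] at h
    exact h.hasDerivAt
  exact ((((hasDerivAt_id x).sub_const α).mul h2).sub (h1.sub_const (G α))).congr_deriv
    (by simp)

theorem exists_Phase_mul_iteratedDeriv_eq {G K : ℝ → ℝ} {α x : ℝ} (hne : α ≠ x)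
    (hGc : ContinuousOn (Phase G α) (uIcc α x)) (hKc : ContinuousOn (Phase K α) (uIcc α x))
    (hG : ∀ y ∈ uIoo α x, ContDiffAt ℝ 2 G y) (hK : ∀ y ∈ uIoo α x, ContDiffAt ℝ 2 K y) :
    ∃ ξ ∈ uIoo α x, Phase G α x * iteratedDeriv 2 K ξ = Phase K α x * iteratedDeriv 2 G ξ := by
  obtain ⟨ξ, hξ, h⟩ := exists_mem_uIoo_ratio_hasDerivAt_eq_ratio_slope hne hGc hKc
    (fun y hy => hasDerivAt_Phase (hG y hy)) (fun y hy => hasDerivAt_Phase (hK y hy))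
  have hξα : ξ - α ≠ 0 := sub_ne_zero.2 fun h => left_notMem_uIoo (h ▸ hξ)
  simp only [Phase_self, sub_zero] at h
  exact ⟨ξ, hξ, mul_left_cancel₀ hξα (by linear_combination h)⟩

theorem Phase_add {G K : ℝ → ℝ} {x : ℝ} (hG : DifferentiableAt ℝ G x) (hK : DifferentiableAt ℝ K x)
    (α : ℝ) : Phase (G + K) α x = Phase G α x + Phase K α x := by
  simp only [Phase, deriv_add hG hK, Pi.add_apply]
  ring

theorem Phase_sq (α x : ℝ) : Phase (fun y => y ^ 2) α x = (x - α) ^ 2 := by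
  simp only [Phase, deriv_pow_field]
  norm_num
  ring

theorem continuous_Phase {f : ℝ → ℝ} (hf : ContDiff ℝ 2 f) (α : ℝ) : Continuous (Phase f α) :=
  (((continuous_id.sub continuous_const).mul (hf.continuous_deriv one_le_two)).sub
    (hf.continuous.sub continuous_const))

end Phase

section RelativeHessian

/-- The quotient `(GP + f)'' / GP''` of second derivatives, in the form that extends continuously
to the closed interval `[0, 1]`, with value `1` at both endpoints. -/
noncomputable def relHessian (f : ℝ → ℝ) (x : ℝ) : ℝ := 1 + x * (1 - x) * iteratedDeriv 2 f x

variable {f : ℝ → ℝ} {α x : ℝ}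

theorem relHessian_zero (x : ℝ) : relHessian 0 x = 1 := by simp [relHessian]

theorem iteratedDeriv_two_GP_add (hf : ContDiff ℝ 2 f) (hx : x ∈ Ioo (0 : ℝ) 1) :
    iteratedDeriv 2 (GP + f) x = relHessian f x / (x * (1 - x)) := by
  have h0 : x ≠ 0 := hx.1.ne'
  have h1 : 1 - x ≠ 0 := (sub_pos.2 hx.2).ne'
  rw [iteratedDeriv_add (contDiffAt_GP hx) hf.contDiffAt, iteratedDeriv_two_GP, relHessian]
  field_simp

theorem continuousOn_Phase_GP (α : ℝ) : ContinuousOn (Phase GP α) (insert α (Ioo 0 1)) := by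
  rintro y (rfl | hy)
  · exact (continuousAt_Phase_GP y).continuousWithinAt
  · exact (hasDerivAt_Phase (contDiffAt_GP hy)).continuousAt.continuousWithinAt

theorem continuousOn_Phase_GP_add (hf : ContDiff ℝ 2 f) (α : ℝ) :
    ContinuousOn (Phase (GP + f) α) (insert α (Ioo 0 1)) := by
  refine ((continuousOn_Phase_GP α).add (continuous_Phase hf α).continuousOn).congr ?_
  rintro y (rfl | hy)
  · simp [Phase_self]
  · exact Phase_add ((contDiffAt_GP hy).differentiableAt one_ne_zero)
      (hf.differentiable two_ne_zero y) α

theorem exists_Phase_eq_relHessian_mul (hf : ContDiff ℝ 2 f) (hα : α ∈ Icc (0 : ℝ) 1)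
    (hx : x ∈ Ioo (0 : ℝ) 1) :
    ∃ ξ ∈ uIcc α x ∩ Ioo 0 1, Phase (GP + f) α x = relHessian f ξ * Phase GP α x := by
  rcases eq_or_ne α x with rfl | hne
  · exact ⟨α, ⟨left_mem_uIcc, hx⟩, by simp [Phase_self]⟩
  have hsub := uIcc_subset_insert_Ioo hα hx
  have hIoo := uIoo_subset_Ioo hα (Ioo_subset_Icc_self hx)
  obtain ⟨ξ, hξ, h⟩ := exists_Phase_mul_iteratedDeriv_eq hne
    ((continuousOn_Phase_GP_add hf α).mono hsub) ((continuousOn_Phase_GP α).mono hsub)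
    (fun y hy => (contDiffAt_GP (hIoo hy)).add hf.contDiffAt) (fun y hy => contDiffAt_GP (hIoo hy))
  refine ⟨ξ, ⟨uIoo_subset_uIcc_self hξ, hIoo hξ⟩, ?_⟩
  have h0 : ξ ≠ 0 := (hIoo hξ).1.ne'
  have h1 : 1 - ξ ≠ 0 := (sub_pos.2 (hIoo hξ).2).ne'
  rw [iteratedDeriv_two_GP, iteratedDeriv_two_GP_add hf (hIoo hξ)] at h
  field_simp at h
  linarith

theorem exists_Phase_eq_mul_sq (hf : ContDiff ℝ 2 f) (hα : α ∈ Icc (0 : ℝ) 1)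
    (hx : x ∈ Ioo (0 : ℝ) 1) :
    ∃ ξ ∈ uIcc α x ∩ Ioo 0 1,
      Phase (GP + f) α x = relHessian f ξ / (2 * (ξ * (1 - ξ))) * (x - α) ^ 2 := by
  rcases eq_or_ne α x with rfl | hne
  · exact ⟨α, ⟨left_mem_uIcc, hx⟩, by simp [Phase_self]⟩
  have hIoo := uIoo_subset_Ioo hα (Ioo_subset_Icc_self hx)
  have hsq : ContDiff ℝ 2 fun y : ℝ => y ^ 2 := contDiff_id.pow 2
  obtain ⟨ξ, hξ, h⟩ := exists_Phase_mul_iteratedDeriv_eq hne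
    ((continuousOn_Phase_GP_add hf α).mono (uIcc_subset_insert_Ioo hα hx))
    (continuous_Phase hsq α).continuousOn
    (fun y hy => (contDiffAt_GP (hIoo hy)).add hf.contDiffAt) (fun y _ => hsq.contDiffAt)
  refine ⟨ξ, ⟨uIoo_subset_uIcc_self hξ, hIoo hξ⟩, ?_⟩
  have h2 : iteratedDeriv 2 (fun y : ℝ => y ^ 2) ξ = 2 := by simp
  rw [h2, Phase_sq, iteratedDeriv_two_GP_add hf (hIoo hξ)] at h
  rw [mul_comm 2, ← div_div]
  linarith

end RelativeHessian

section Admissible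

/-- Quantitative form of "`GP + f` is a strictly convex symplectic potential on `[0, 1]`": the
relative Hessian is bounded below by `m > 0`, and `f''` is bounded by `B`. Estimates whose
constants depend on `m` and `B` only are uniform over such perturbations `f`. -/
structure IsAdmissible (m B : ℝ) (f : ℝ → ℝ) : Prop where
  contDiff : ContDiff ℝ 2 f
  pos : 0 < m
  le_relHessian : ∀ x ∈ Icc (0 : ℝ) 1, m ≤ relHessian f x
  abs_iteratedDeriv_le : ∀ x ∈ Icc (0 : ℝ) 1, |iteratedDeriv 2 f x| ≤ B

theorem isAdmissible_zero : IsAdmissible 1 0 0 where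
  contDiff := contDiff_const
  pos := one_pos
  le_relHessian x _ := (relHessian_zero x).ge
  abs_iteratedDeriv_le x _ := by simp

namespace IsAdmissible

variable {m B α x : ℝ} {f : ℝ → ℝ} (h : IsAdmissible m B f)

include h

theorem le_one : m ≤ 1 := by
  simpa [relHessian] using h.le_relHessian 0 (by simp)

theorem bound_nonneg : 0 ≤ B :=
  (abs_nonneg _).trans (h.abs_iteratedDeriv_le 0 (by simp))

theorem abs_relHessian_sub_one_le (hx : x ∈ Icc (0 : ℝ) 1) :
    |relHessian f x - 1| ≤ B * (x * (1 - x)) := by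
  have hx' : 0 ≤ x * (1 - x) := mul_nonneg hx.1 (sub_nonneg.2 hx.2)
  rw [relHessian, add_sub_cancel_left, abs_mul, abs_of_nonneg hx', mul_comm]
  exact mul_le_mul_of_nonneg_right (h.abs_iteratedDeriv_le x hx) hx'

theorem relHessian_le (hx : x ∈ Icc (0 : ℝ) 1) : relHessian f x ≤ 1 + B := by
  have h1 := (le_abs_self _).trans (h.abs_relHessian_sub_one_le hx)
  have h2 : x * (1 - x) ≤ 1 := by nlinarith [hx.1, hx.2]
  nlinarith [h.bound_nonneg]

theorem two_mul_le_relHessian_div (hx : x ∈ Ioo (0 : ℝ) 1) :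
    2 * m ≤ relHessian f x / (2 * (x * (1 - x))) := by
  have hx' : 0 < x * (1 - x) := mul_pos hx.1 (sub_pos.2 hx.2)
  rw [le_div_iff₀ (by positivity)]
  nlinarith [h.le_relHessian x (Ioo_subset_Icc_self hx), h.pos, sq_nonneg (2 * x - 1)]

theorem mul_sq_le_Phase (hα : α ∈ Icc (0 : ℝ) 1) (hx : x ∈ Ioo (0 : ℝ) 1) :
    2 * m * (x - α) ^ 2 ≤ Phase (GP + f) α x := by
  obtain ⟨ξ, hξ, hF⟩ := exists_Phase_eq_mul_sq h.contDiff hα hx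
  rw [hF]
  exact mul_le_mul_of_nonneg_right (h.two_mul_le_relHessian_div hξ.2) (sq_nonneg _)

theorem Phase_nonneg (hα : α ∈ Icc (0 : ℝ) 1) (hx : x ∈ Ioo (0 : ℝ) 1) :
    0 ≤ Phase (GP + f) α x :=
  (mul_nonneg (mul_nonneg zero_le_two h.pos.le) (sq_nonneg _)).trans (h.mul_sq_le_Phase hα hx)

end IsAdmissible

theorem two_mul_sq_le_Phase_GP {α x : ℝ} (hα : α ∈ Icc (0 : ℝ) 1) (hx : x ∈ Ioo (0 : ℝ) 1) :
    2 * (x - α) ^ 2 ≤ Phase GP α x := by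
  simpa using isAdmissible_zero.mul_sq_le_Phase hα hx

theorem Phase_GP_nonneg {α x : ℝ} (hα : α ∈ Icc (0 : ℝ) 1) (hx : x ∈ Ioo (0 : ℝ) 1) :
    0 ≤ Phase GP α x := by
  simpa using isAdmissible_zero.Phase_nonneg hα hx

namespace IsAdmissible

variable {m B α x : ℝ} {f : ℝ → ℝ} (h : IsAdmissible m B f)

include h

theorem mul_Phase_GP_le_Phase (hα : α ∈ Icc (0 : ℝ) 1) (hx : x ∈ Ioo (0 : ℝ) 1) :
    m * Phase GP α x ≤ Phase (GP + f) α x := by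
  obtain ⟨ξ, hξ, hF⟩ := exists_Phase_eq_relHessian_mul h.contDiff hα hx
  rw [hF]
  exact mul_le_mul_of_nonneg_right (h.le_relHessian ξ (Ioo_subset_Icc_self hξ.2))
    (Phase_GP_nonneg hα hx)

theorem Phase_le_mul_Phase_GP (hα : α ∈ Icc (0 : ℝ) 1) (hx : x ∈ Ioo (0 : ℝ) 1) :
    Phase (GP + f) α x ≤ (1 + B) * Phase GP α x := by
  obtain ⟨ξ, hξ, hF⟩ := exists_Phase_eq_relHessian_mul h.contDiff hα hx
  rw [hF]
  exact mul_le_mul_of_nonneg_right (h.relHessian_le (Ioo_subset_Icc_self hξ.2))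
    (Phase_GP_nonneg hα hx)

theorem abs_Phase_sub_Phase_GP_le (hα : α ∈ Icc (0 : ℝ) 1) (hx : x ∈ Ioo (0 : ℝ) 1) :
    |Phase (GP + f) α x - Phase GP α x| ≤ B * (α * (1 - α) + |x - α|) * Phase GP α x := by
  obtain ⟨ξ, hξ, hF⟩ := exists_Phase_eq_relHessian_mul h.contDiff hα hx
  have hD := Phase_GP_nonneg hα hx
  have hξI : ξ ∈ Icc (0 : ℝ) 1 := Ioo_subset_Icc_self hξ.2
  calc |Phase (GP + f) α x - Phase GP α x| = |relHessian f ξ - 1| * Phase GP α x := by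
        rw [hF, ← sub_one_mul, abs_mul, abs_of_nonneg hD]
    _ ≤ B * (ξ * (1 - ξ)) * Phase GP α x := by
        gcongr
        exact h.abs_relHessian_sub_one_le hξI
    _ ≤ B * (α * (1 - α) + |x - α|) * Phase GP α x := by
        have hB := h.bound_nonneg
        gcongr
        exact (mul_one_sub_le_add_abs hα hξI).trans
          (add_le_add_right (abs_sub_left_of_mem_uIcc hξ.1) _)

end IsAdmissible

end Admissible

section LaplaceIntegral

/-- The Laplace integral `∫₀¹ e^{-l F}` of a phase `F` at a real large parameter `l`; thus
`Qnorm G N α = 2 * π * laplaceIntegral (Phase G α) N`. -/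
noncomputable def laplaceIntegral (F : ℝ → ℝ) (l : ℝ) : ℝ := ∫ x in (0 : ℝ)..1, Real.exp (-l * F x)

/-- The norming constant of the perturbed potential `GP + f` relative to that of `GP`. -/
noncomputable def laplaceRatio (f : ℝ → ℝ) (l α : ℝ) : ℝ :=
  laplaceIntegral (Phase (GP + f) α) l / laplaceIntegral (Phase GP α) l

variable {F K : ℝ → ℝ} {k l u α m B : ℝ} {f : ℝ → ℝ}

theorem laplaceIntegral_eq_setIntegral (F : ℝ → ℝ) (l : ℝ) :
    laplaceIntegral F l = ∫ x in Ioo (0 : ℝ) 1, Real.exp (-l * F x) := by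
  rw [laplaceIntegral, intervalIntegral.integral_of_le zero_le_one, integral_Ioc_eq_integral_Ioo]

theorem intervalIntegrable_exp_neg_mul (hF : Measurable F) (hF0 : ∀ x ∈ Ioo (0 : ℝ) 1, 0 ≤ F x)
    (hl : 0 ≤ l) : IntervalIntegrable (fun x => Real.exp (-l * F x)) volume 0 1 := by
  rw [intervalIntegrable_iff_integrableOn_Ioo_of_le zero_le_one]
  refine Measure.integrableOn_of_bounded (M := 1) (by simp) (by fun_prop) ?_
  refine (ae_restrict_iff' measurableSet_Ioo).2 (.of_forall fun x hx => ?_)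
  rw [Real.norm_of_nonneg (Real.exp_pos _).le, Real.exp_le_one_iff, neg_mul]
  exact neg_nonpos.2 (mul_nonneg hl (hF0 x hx))

theorem laplaceIntegral_pos (hF : Measurable F) (hF0 : ∀ x ∈ Ioo (0 : ℝ) 1, 0 ≤ F x)
    (hl : 0 ≤ l) : 0 < laplaceIntegral F l :=
  intervalIntegral.intervalIntegral_pos_of_pos (intervalIntegrable_exp_neg_mul hF hF0 hl)
    (fun _ => Real.exp_pos _) zero_lt_one

theorem laplaceIntegral_le_of_mul_le (hF : Measurable F) (hK : Measurable K)
    (hF0 : ∀ x ∈ Ioo (0 : ℝ) 1, 0 ≤ F x) (hK0 : ∀ x ∈ Ioo (0 : ℝ) 1, 0 ≤ K x)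
    (hk : 0 ≤ k) (hl : 0 ≤ l) (h : ∀ x ∈ Ioo (0 : ℝ) 1, k * K x ≤ l * F x) :
    laplaceIntegral F l ≤ laplaceIntegral K k :=
  intervalIntegral.integral_mono_on_of_le_Ioo zero_le_one
    (intervalIntegrable_exp_neg_mul hF hF0 hl) (intervalIntegrable_exp_neg_mul hK hK0 hk)
    fun x hx => Real.exp_le_exp.2 (by linarith [h x hx])

theorem intervalIntegrable_exp_neg_mul_Phase_GP (hα : α ∈ Icc (0 : ℝ) 1) (hl : 0 ≤ l) :
    IntervalIntegrable (fun x => Real.exp (-l * Phase GP α x)) volume 0 1 :=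
  intervalIntegrable_exp_neg_mul (measurable_Phase measurable_GP α)
    (fun _ hx => Phase_GP_nonneg hα hx) hl

theorem laplaceIntegral_Phase_GP_pos (hα : α ∈ Icc (0 : ℝ) 1) (hl : 0 ≤ l) :
    0 < laplaceIntegral (Phase GP α) l :=
  laplaceIntegral_pos (measurable_Phase measurable_GP α) (fun _ hx => Phase_GP_nonneg hα hx) hl

-- `Phase GP α` is convex and vanishes at `α`, so the contraction of `[0, 1]` towards `α` by the
-- factor `u` multiplies it by at most `u`.
theorem laplaceIntegral_Phase_GP_mul_le (hα : α ∈ Icc (0 : ℝ) 1) (hl : 0 ≤ l)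
    (hu : 0 < u) (hu1 : u ≤ 1) :
    laplaceIntegral (Phase GP α) (u * l) ≤ u⁻¹ * laplaceIntegral (Phase GP α) l := by
  set g : ℝ → ℝ := fun x => Real.exp (-l * Phase GP α x)
  have hg : IntervalIntegrable g volume 0 1 := intervalIntegrable_exp_neg_mul_Phase_GP hα hl
  have ha : 0 ≤ (1 - u) * α := mul_nonneg (sub_nonneg.2 hu1) hα.1
  have hb : (1 - u) * α + u ≤ 1 := by nlinarith [hα.2]
  have hgu : IntervalIntegrable g volume ((1 - u) * α) ((1 - u) * α + u) :=
    hg.mono_set (by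
      rw [uIcc_of_le (by linarith), uIcc_of_le zero_le_one]
      exact Icc_subset_Icc ha hb)
  have hgc : IntervalIntegrable (fun x => g ((1 - u) * α + u * x)) volume 0 1 := by
    simpa [hu.ne'] using (hgu.comp_add_left ((1 - u) * α)).comp_mul_left (c := u)
  calc laplaceIntegral (Phase GP α) (u * l)
      ≤ ∫ x in (0 : ℝ)..1, g ((1 - u) * α + u * x) := by
        refine intervalIntegral.integral_mono_on_of_le_Ioo zero_le_one
          (intervalIntegrable_exp_neg_mul_Phase_GP hα (by positivity)) hgc fun x hx => ?_
        refine Real.exp_le_exp.2 ?_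
        nlinarith [Phase_GP_combo_le hα hx ⟨hu.le, hu1⟩]
    _ = u⁻¹ * ∫ x in (1 - u) * α..(1 - u) * α + u, g x := by
        simp [intervalIntegral.integral_comp_add_mul g hu.ne']
    _ ≤ u⁻¹ * laplaceIntegral (Phase GP α) l := by
        gcongr
        exact intervalIntegral.integral_mono_interval ha (by linarith) hb
          (.of_forall fun x => (Real.exp_pos _).le) hg

namespace IsAdmissible

variable (h : IsAdmissible m B f)

include h

theorem measurable_Phase (α : ℝ) : Measurable (Phase (GP + f) α) :=
  _root_.measurable_Phase (measurable_GP.add h.contDiff.continuous.measurable) α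

theorem laplaceIntegral_pos (hα : α ∈ Icc (0 : ℝ) 1) (hl : 0 ≤ l) :
    0 < laplaceIntegral (Phase (GP + f) α) l :=
  _root_.laplaceIntegral_pos (h.measurable_Phase α) (fun _ hx => h.Phase_nonneg hα hx) hl

theorem laplaceRatio_mem_Icc (hα : α ∈ Icc (0 : ℝ) 1) (hl : 0 ≤ l) :
    laplaceRatio f l α ∈ Icc (1 + B)⁻¹ m⁻¹ := by
  have hB : 0 < 1 + B := by linarith [h.bound_nonneg]
  have hB1 : (1 + B)⁻¹ ≤ 1 := inv_le_one_of_one_le₀ (by linarith [h.bound_nonneg])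
  have hmeas := _root_.measurable_Phase measurable_GP α
  have hD0 : ∀ x ∈ Ioo (0 : ℝ) 1, 0 ≤ Phase GP α x := fun x hx => Phase_GP_nonneg hα hx
  have hF0 : ∀ x ∈ Ioo (0 : ℝ) 1, 0 ≤ Phase (GP + f) α x := fun x hx => h.Phase_nonneg hα hx
  rw [laplaceRatio, mem_Icc, le_div_iff₀ (laplaceIntegral_Phase_GP_pos hα hl),
    div_le_iff₀ (laplaceIntegral_Phase_GP_pos hα hl)]
  constructor
  · have hle := laplaceIntegral_Phase_GP_mul_le hα (mul_nonneg hB.le hl) (inv_pos.2 hB) hB1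
    rw [inv_mul_cancel_left₀ hB.ne', inv_inv] at hle
    refine (inv_mul_le_iff₀ hB).2 (hle.trans (mul_le_mul_of_nonneg_left ?_ hB.le))
    refine laplaceIntegral_le_of_mul_le hmeas (h.measurable_Phase α) hD0 hF0 hl
      (mul_nonneg hB.le hl) fun x hx => ?_
    nlinarith [h.Phase_le_mul_Phase_GP hα hx]
  · refine (laplaceIntegral_le_of_mul_le (h.measurable_Phase α) hmeas hF0 hD0
      (mul_nonneg h.pos.le hl) hl fun x hx => ?_).trans
        (laplaceIntegral_Phase_GP_mul_le hα hl h.pos h.le_one)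
    nlinarith [h.mul_Phase_GP_le_Phase hα hx]

theorem laplaceRatio_pos (hα : α ∈ Icc (0 : ℝ) 1) (hl : 0 ≤ l) : 0 < laplaceRatio f l α :=
  div_pos (h.laplaceIntegral_pos hα hl) (laplaceIntegral_Phase_GP_pos hα hl)

theorem mul_abs_Phase_sub_Phase_GP_le {x : ℝ} (hα : α ∈ Icc (0 : ℝ) 1) (hx : x ∈ Ioo (0 : ℝ) 1)
    (hl : 0 < l) :
    l * |Phase (GP + f) α x - Phase GP α x| ≤ B * (α * (1 - α) + 1 / √l) *
      (l * Phase GP α x * (1 + l * Phase GP α x)) := by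
  have hD := Phase_GP_nonneg hα hx
  have hB := h.bound_nonneg
  have hα' : 0 ≤ α * (1 - α) := mul_nonneg hα.1 (sub_nonneg.2 hα.2)
  have hdiff := h.abs_Phase_sub_Phase_GP_le hα hx
  have hsq := two_mul_sq_le_Phase_GP hα hx
  set D := Phase GP α x
  have hdist : |x - α| ≤ (1 + l * D) / √l := by
    refine (le_one_add_mul_sq_div hl).trans ?_
    rw [sq_abs]
    gcongr
    linarith [sq_nonneg (x - α)]
  calc l * |Phase (GP + f) α x - D|
      ≤ l * (B * (α * (1 - α) + (1 + l * D) / √l) * D) := by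
        gcongr
        exact hdiff.trans (by gcongr)
    _ = B * (α * (1 - α) + 1 / √l * (1 + l * D)) * (l * D) := by ring
    _ ≤ B * (α * (1 - α) + 1 / √l) * (l * D * (1 + l * D)) := by
        have : 0 ≤ B * (α * (1 - α)) * (l * D) * (l * D) := by positivity
        linarith

theorem abs_exp_Phase_sub_exp_Phase_GP_le {x : ℝ} (hα : α ∈ Icc (0 : ℝ) 1)
    (hx : x ∈ Ioo (0 : ℝ) 1) (hl : 0 < l) :
    |Real.exp (-l * Phase (GP + f) α x) - Real.exp (-l * Phase GP α x)| ≤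
      8 * B / m ^ 2 * (α * (1 - α) + 1 / √l) * Real.exp (-(m / 2 * l) * Phase GP α x) := by
  have hdiff := h.mul_abs_Phase_sub_Phase_GP_le hα hx hl
  have hmD := mul_le_mul_of_nonneg_left (h.mul_Phase_GP_le_Phase hα hx) hl.le
  have hv0 : 0 ≤ l * Phase GP α x := mul_nonneg hl.le (Phase_GP_nonneg hα hx)
  have hc : 0 ≤ B * (α * (1 - α) + 1 / √l) :=
    mul_nonneg h.bound_nonneg
      (add_nonneg (mul_nonneg hα.1 (sub_nonneg.2 hα.2)) (by positivity))
  set v := l * Phase GP α x with hv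
  calc _ = |Real.exp (-(l * Phase (GP + f) α x)) - Real.exp (-v)| := by simp only [neg_mul, hv]
    _ ≤ Real.exp (-(m * v)) * |l * Phase (GP + f) α x - v| :=
        abs_exp_neg_sub_exp_neg_le (by linarith) (mul_le_of_le_one_left hv0 h.le_one)
    _ ≤ Real.exp (-(m * v)) *
          (B * (α * (1 - α) + 1 / √l) * (8 / m ^ 2 * Real.exp (m * v / 2))) := by
        rw [hv, ← mul_sub, abs_mul, abs_of_pos hl, ← hv]
        refine mul_le_mul_of_nonneg_left (hdiff.trans ?_) (Real.exp_pos _).le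
        exact mul_le_mul_of_nonneg_left (mul_one_add_le_exp h.pos h.le_one hv0) hc
    _ = 8 * B / m ^ 2 * (α * (1 - α) + 1 / √l) *
          (Real.exp (-(m * v)) * Real.exp (m * v / 2)) := by ring
    _ = _ := by
        rw [← Real.exp_add]
        congr 2
        ring

theorem abs_laplaceIntegral_sub_le (hα : α ∈ Icc (0 : ℝ) 1) (hl : 0 < l) :
    |laplaceIntegral (Phase (GP + f) α) l - laplaceIntegral (Phase GP α) l| ≤
      16 * B / m ^ 3 * (α * (1 - α) + 1 / √l) * laplaceIntegral (Phase GP α) l := by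
  have hm := h.pos
  have hml : 0 ≤ m / 2 * l := by positivity
  have hB := h.bound_nonneg
  have hα' : 0 ≤ α * (1 - α) := mul_nonneg hα.1 (sub_nonneg.2 hα.2)
  have hpt : ∀ᵐ x, x ∈ Ioc (0 : ℝ) 1 →
      ‖Real.exp (-l * Phase (GP + f) α x) - Real.exp (-l * Phase GP α x)‖ ≤
        8 * B / m ^ 2 * (α * (1 - α) + 1 / √l) * Real.exp (-(m / 2 * l) * Phase GP α x) := by
    filter_upwards [Ioo_ae_eq_Ioc (μ := volume) (a := (0 : ℝ)) (b := 1)] with x hxI hx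
    exact h.abs_exp_Phase_sub_exp_Phase_GP_le hα (hxI.mpr hx) hl
  rw [laplaceIntegral, laplaceIntegral, ← intervalIntegral.integral_sub
    (intervalIntegrable_exp_neg_mul (h.measurable_Phase α) (fun x hx => h.Phase_nonneg hα hx) hl.le)
    (intervalIntegrable_exp_neg_mul_Phase_GP hα hl.le)]
  refine (intervalIntegral.norm_integral_le_of_norm_le zero_le_one hpt
    ((intervalIntegrable_exp_neg_mul_Phase_GP hα hml).const_mul _)).trans ?_
  rw [intervalIntegral.integral_const_mul]
  refine (mul_le_mul_of_nonneg_left (laplaceIntegral_Phase_GP_mul_le hα hl.le (half_pos hm)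
    (by linarith [h.le_one])) (by positivity)).trans_eq ?_
  rw [laplaceIntegral]
  field_simp
  ring

theorem abs_laplaceRatio_sub_one_le (hα : α ∈ Icc (0 : ℝ) 1) (hl : 0 < l) :
    |laplaceRatio f l α - 1| ≤ 16 * B / m ^ 3 * (α * (1 - α) + 1 / √l) := by
  have hD := laplaceIntegral_Phase_GP_pos hα hl.le
  rw [laplaceRatio, div_sub_one hD.ne', abs_div, abs_of_pos hD, div_le_iff₀ hD]
  exact h.abs_laplaceIntegral_sub_le hα hl

end IsAdmissible

end LaplaceIntegral

section LaplaceMethod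

theorem sqrt_mul_setIntegral_eq_integral_rescaled {S : Set ℝ} (hS : MeasurableSet S) {l : ℝ}
    (α : ℝ) (g : ℝ → ℝ) :
    √l * ∫ x in S, g x = ∫ u, S.indicator g (α + u / √l) := by
  rw [Measure.integral_comp_div (fun y => S.indicator g (α + y)), integral_add_left_eq_self,
    integral_indicator hS, abs_of_nonneg (Real.sqrt_nonneg l), smul_eq_mul]

theorem tendsto_sqrt_mul_setIntegral_exp_neg {ι : Type*} {p : Filter ι} [p.IsCountablyGenerated]
    {S : Set ℝ} (hS : MeasurableSet S) {a c θ : ℝ} (hSa : S ∈ 𝓝 a) (hθ : 0 < θ)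
    {F κ : ι → ℝ → ℝ} {l α : ι → ℝ} (hl : Tendsto l p atTop) (hα : Tendsto α p (𝓝 a))
    (hκ : Tendsto (Function.uncurry κ) (p ×ˢ 𝓝 a) (𝓝 c)) (hF : ∀ i, Measurable (F i))
    (hFκ : ∀ i, ∀ x ∈ S, F i x = κ i x * (x - α i) ^ 2) (hθκ : ∀ i, ∀ x ∈ S, θ ≤ κ i x) :
    Tendsto (fun i => √(l i) * ∫ x in S, Real.exp (-l i * F i x)) p (𝓝 √(Real.pi / c)) := by
  have hscale : ∀ i u, 0 < l i → α i + u / √(l i) ∈ S → -l i * F i (α i + u / √(l i)) =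
      -κ i (α i + u / √(l i)) * u ^ 2 := fun i u hli hu => by
    rw [hFκ i _ hu, add_sub_cancel_left, div_pow, Real.sq_sqrt hli.le]
    field_simp
  simp only [fun i => sqrt_mul_setIntegral_eq_integral_rescaled hS (l := l i) (α i)]
  rw [← integral_gaussian]
  refine tendsto_integral_filter_of_dominated_convergence (fun u => Real.exp (-θ * u ^ 2))
    (.of_forall fun i => ?_) ?_ (integrable_exp_neg_mul_sq hθ) (.of_forall fun u => ?_)
  · have hg : Measurable (S.indicator fun x => Real.exp (-l i * F i x)) :=
      (((hF i).const_mul _).exp).indicator hS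
    exact (hg.comp (by fun_prop)).aestronglyMeasurable
  · filter_upwards [hl.eventually_gt_atTop 0] with i hli
    refine .of_forall fun u => ?_
    by_cases hu : α i + u / √(l i) ∈ S
    · rw [indicator_of_mem hu, Real.norm_of_nonneg (Real.exp_pos _).le, hscale i u hli hu]
      gcongr
      exact hθκ i _ hu
    · rw [indicator_of_notMem hu, norm_zero]
      exact (Real.exp_pos _).le
  · have hx : Tendsto (fun i => α i + u / √(l i)) p (𝓝 a) := by
      simpa using hα.add ((Real.tendsto_sqrt_atTop.comp hl).const_div_atTop u)
    refine ((hκ.comp (tendsto_id.prodMk hx)).neg.mul_const (u ^ 2)).rexp.congr' ?_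
    filter_upwards [hl.eventually_gt_atTop 0, hx.eventually_mem hSa] with i hli hu
    rw [indicator_of_mem hu, hscale i u hli hu]
    rfl

end LaplaceMethod

section RatioLimit

variable {ι : Type*} {p : Filter ι} {a m B : ℝ} {f : ι → ℝ → ℝ} {f' : ℝ → ℝ} {l α : ι → ℝ}

variable (hf : ∀ i, IsAdmissible m B (f i)) (hα : ∀ i, α i ∈ Icc (0 : ℝ) 1)
  (hl : Tendsto l p atTop) (hαa : Tendsto α p (𝓝 a))

include hf hα hl hαa

theorem tendsto_laplaceRatio_of_endpoint (ha : a * (1 - a) = 0) :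
    Tendsto (fun i => laplaceRatio (f i) (l i) (α i)) p (𝓝 1) := by
  have herr : Tendsto (fun i => 16 * B / m ^ 3 * (α i * (1 - α i) + 1 / √(l i))) p (𝓝 0) := by
    have hsq := (Real.tendsto_sqrt_atTop.comp hl).const_div_atTop 1
    simpa [ha] using ((hαa.mul (hαa.const_sub 1)).add hsq).const_mul (16 * B / m ^ 3)
  refine tendsto_iff_dist_tendsto_zero.2 (squeeze_zero' (.of_forall fun _ => dist_nonneg) ?_ herr)
  filter_upwards [hl.eventually_gt_atTop 0] with i hli
  exact (hf i).abs_laplaceRatio_sub_one_le (hα i) hli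

theorem tendsto_sqrt_mul_laplaceIntegral [p.IsCountablyGenerated]
    (ha : a ∈ Ioo (0 : ℝ) 1)
    (hff' : Tendsto (fun q : ι × ℝ => iteratedDeriv 2 (f q.1) q.2) (p ×ˢ 𝓝 a)
      (𝓝 (iteratedDeriv 2 f' a))) :
    Tendsto (fun i => √(l i) * laplaceIntegral (Phase (GP + f i) (α i)) (l i)) p
      (𝓝 √(Real.pi / (relHessian f' a / (2 * (a * (1 - a)))))) := by
  rcases p.eq_or_neBot with rfl | _
  · exact tendsto_bot
  have hm : 0 < m := let ⟨i⟩ := nonempty_of_neBot p; (hf i).pos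
  choose! ξ hξ hξF using fun i x (hx : x ∈ Ioo (0 : ℝ) 1) =>
    exists_Phase_eq_mul_sq (hf i).contDiff (hα i) hx
  have hξa : Tendsto (fun q : ι × ℝ => ξ q.1 q.2) (p ×ˢ 𝓝 a) (𝓝 a) :=
    tendsto_of_mem_uIcc (hαa.comp tendsto_fst) tendsto_snd
      ((tendsto_snd.eventually_mem (isOpen_Ioo.mem_nhds ha)).mono fun q hq => (hξ q.1 q.2 hq).1)
  have hw : Tendsto (fun q : ι × ℝ => ξ q.1 q.2 * (1 - ξ q.1 q.2)) (p ×ˢ 𝓝 a)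
      (𝓝 (a * (1 - a))) := hξa.mul (hξa.const_sub 1)
  have hH : Tendsto (fun q : ι × ℝ => relHessian (f q.1) (ξ q.1 q.2)) (p ×ˢ 𝓝 a)
      (𝓝 (relHessian f' a)) :=
    (hw.mul (hff'.comp (tendsto_fst.prodMk hξa))).const_add 1
  have ha0 : a * (1 - a) ≠ 0 := (mul_pos ha.1 (sub_pos.2 ha.2)).ne'
  simp only [laplaceIntegral_eq_setIntegral]
  exact tendsto_sqrt_mul_setIntegral_exp_neg
    (κ := fun i x => relHessian (f i) (ξ i x) / (2 * (ξ i x * (1 - ξ i x))))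
    measurableSet_Ioo (isOpen_Ioo.mem_nhds ha) (mul_pos two_pos hm) hl hαa
    (hH.div (hw.const_mul 2) (mul_ne_zero two_ne_zero ha0))
    (fun i => (hf i).measurable_Phase (α i)) hξF
    fun i x hx => (hf i).two_mul_le_relHessian_div (hξ i x hx).2

theorem tendsto_laplaceRatio_of_mem_Ioo [p.IsCountablyGenerated]
    (ha : a ∈ Ioo (0 : ℝ) 1)
    (hff' : Tendsto (fun q : ι × ℝ => iteratedDeriv 2 (f q.1) q.2) (p ×ˢ 𝓝 a)
      (𝓝 (iteratedDeriv 2 f' a))) :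
    Tendsto (fun i => laplaceRatio (f i) (l i) (α i)) p (𝓝 (√(relHessian f' a))⁻¹) := by
  have hF := tendsto_sqrt_mul_laplaceIntegral hf hα hl hαa ha hff'
  have hD := tendsto_sqrt_mul_laplaceIntegral (f := fun _ => 0) (f' := 0)
    (fun _ => isAdmissible_zero) hα hl hαa ha (by simpa using tendsto_const_nhds)
  have hw : 0 < Real.pi * (2 * (a * (1 - a))) :=
    mul_pos Real.pi_pos (mul_pos two_pos (mul_pos ha.1 (sub_pos.2 ha.2)))
  rw [div_div_eq_mul_div, Real.sqrt_div hw.le] at hF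
  rw [relHessian_zero, div_div_eq_mul_div, div_one] at hD
  have hlim := hF.div hD (Real.sqrt_pos.2 hw).ne'
  rw [div_div_cancel_left' (Real.sqrt_pos.2 hw).ne'] at hlim
  refine hlim.congr' ?_
  filter_upwards [hl.eventually_gt_atTop 0] with i hli
  rw [Pi.div_apply, mul_div_mul_left _ _ (Real.sqrt_pos.2 hli).ne', add_zero, laplaceRatio]

theorem tendsto_laplaceRatio [p.IsCountablyGenerated]
    (ha : a ∈ Icc (0 : ℝ) 1)
    (hff' : Tendsto (fun q : ι × ℝ => iteratedDeriv 2 (f q.1) q.2) (p ×ˢ 𝓝 a)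
      (𝓝 (iteratedDeriv 2 f' a))) :
    Tendsto (fun i => laplaceRatio (f i) (l i) (α i)) p (𝓝 (√(relHessian f' a))⁻¹) := by
  by_cases ha0 : a * (1 - a) = 0
  · simpa [relHessian, ha0] using tendsto_laplaceRatio_of_endpoint hf hα hl hαa ha0
  · rw [mul_eq_zero, not_or, sub_eq_zero] at ha0
    exact tendsto_laplaceRatio_of_mem_Ioo hf hα hl hαa
      ⟨ha.1.lt_of_ne' ha0.1, ha.2.lt_of_ne (Ne.symm ha0.2)⟩ hff'

end RatioLimit

section Interpolation

/-- The perturbation interpolating linearly between `f0` and `f1`, so that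
`Gt f0 f1 t = GP + interpolant f0 f1 t`. -/
noncomputable def interpolant (f0 f1 : ℝ → ℝ) (t : ℝ) : ℝ → ℝ := fun x => (1 - t) * f0 x + t * f1 x

variable {f f0 f1 : ℝ → ℝ} {t x α m B : ℝ}

theorem Gt_eq_GP_add_interpolant : Gt f0 f1 t = GP + interpolant f0 f1 t := rfl

theorem interpolant_zero : interpolant f0 f1 0 = f0 := by ext; simp [interpolant]

theorem interpolant_one : interpolant f0 f1 1 = f1 := by ext; simp [interpolant]

theorem contDiff_interpolant (hf0 : ContDiff ℝ 2 f0) (hf1 : ContDiff ℝ 2 f1) (t : ℝ) :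
    ContDiff ℝ 2 (interpolant f0 f1 t) :=
  (contDiff_const.mul hf0).add (contDiff_const.mul hf1)

theorem iteratedDeriv_two_interpolant (hf0 : ContDiff ℝ 2 f0) (hf1 : ContDiff ℝ 2 f1) (t x : ℝ) :
    iteratedDeriv 2 (interpolant f0 f1 t) x =
      (1 - t) * iteratedDeriv 2 f0 x + t * iteratedDeriv 2 f1 x := by
  unfold interpolant
  rw [iteratedDeriv_fun_add (contDiff_const.mul hf0).contDiffAt (contDiff_const.mul hf1).contDiffAt,
    iteratedDeriv_const_mul_field, iteratedDeriv_const_mul_field]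

theorem relHessian_interpolant (hf0 : ContDiff ℝ 2 f0) (hf1 : ContDiff ℝ 2 f1) (t x : ℝ) :
    relHessian (interpolant f0 f1 t) x = (1 - t) * relHessian f0 x + t * relHessian f1 x := by
  simp only [relHessian, iteratedDeriv_two_interpolant hf0 hf1]
  ring

theorem IsAdmissible.interpolant (h0 : IsAdmissible m B f0) (h1 : IsAdmissible m B f1)
    (ht : t ∈ Icc (0 : ℝ) 1) : IsAdmissible m B (interpolant f0 f1 t) where
  contDiff := contDiff_interpolant h0.contDiff h1.contDiff t
  pos := h0.pos
  le_relHessian x hx := by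
    rw [relHessian_interpolant h0.contDiff h1.contDiff]
    exact convex_Ici m (h0.le_relHessian x hx) (h1.le_relHessian x hx) (sub_nonneg.2 ht.2) ht.1
      (sub_add_cancel 1 t)
  abs_iteratedDeriv_le x hx := by
    rw [iteratedDeriv_two_interpolant h0.contDiff h1.contDiff, abs_le, ← mem_Icc]
    exact convex_Icc (-B) B (abs_le.1 (h0.abs_iteratedDeriv_le x hx))
      (abs_le.1 (h1.abs_iteratedDeriv_le x hx)) (sub_nonneg.2 ht.2) ht.1 (sub_add_cancel 1 t)

theorem relHessian_pos (hf : ContDiff ℝ 2 f)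
    (h : ∀ x ∈ Ioo (0 : ℝ) 1, 0 < iteratedDeriv 2 (GP + f) x) (hx : x ∈ Icc (0 : ℝ) 1) :
    0 < relHessian f x := by
  by_cases hx0 : x * (1 - x) = 0
  · simp [relHessian, hx0]
  · have hxI : x ∈ Ioo (0 : ℝ) 1 := by
      rw [mul_eq_zero, not_or, sub_eq_zero] at hx0
      exact ⟨hx.1.lt_of_ne' hx0.1, hx.2.lt_of_ne (Ne.symm hx0.2)⟩
    have h' := h x hxI
    rw [iteratedDeriv_two_GP_add hf hxI] at h'
    exact (div_pos_iff_of_pos_right (mul_pos hxI.1 (sub_pos.2 hxI.2))).1 h'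

theorem continuous_relHessian (hf : ContDiff ℝ 2 f) : Continuous (relHessian f) := by
  have := hf.continuous_iteratedDeriv 2 le_rfl
  unfold relHessian
  fun_prop

theorem exists_isAdmissible (hf : ContDiff ℝ 2 f)
    (h : ∀ x ∈ Ioo (0 : ℝ) 1, 0 < iteratedDeriv 2 (GP + f) x) : ∃ m B, IsAdmissible m B f := by
  obtain ⟨y, hy, hmin⟩ := isCompact_Icc.exists_isMinOn (nonempty_Icc.2 zero_le_one)
    (continuous_relHessian hf).continuousOn
  obtain ⟨B, hB⟩ := isCompact_Icc.exists_bound_of_continuousOn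
    (hf.continuous_iteratedDeriv 2 le_rfl).continuousOn
  exact ⟨relHessian f y, B, hf, relHessian_pos hf h hy, fun x hx => hmin hx, hB⟩

theorem IsAdmissible.mono {m' B' : ℝ} (h : IsAdmissible m B f) (hm' : 0 < m') (hm : m' ≤ m)
    (hB : B ≤ B') : IsAdmissible m' B' f where
  contDiff := h.contDiff
  pos := hm'
  le_relHessian x hx := hm.trans (h.le_relHessian x hx)
  abs_iteratedDeriv_le x hx := (h.abs_iteratedDeriv_le x hx).trans hB

theorem exists_isAdmissible_pair (hf0 : ContDiff ℝ 2 f0) (hf1 : ContDiff ℝ 2 f1)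
    (hG0 : ∀ x ∈ Ioo (0 : ℝ) 1, 0 < iteratedDeriv 2 (Gt f0 f1 0) x)
    (hG1 : ∀ x ∈ Ioo (0 : ℝ) 1, 0 < iteratedDeriv 2 (Gt f0 f1 1) x) :
    ∃ m B, IsAdmissible m B f0 ∧ IsAdmissible m B f1 := by
  rw [Gt_eq_GP_add_interpolant, interpolant_zero] at hG0
  rw [Gt_eq_GP_add_interpolant, interpolant_one] at hG1
  obtain ⟨m0, B0, h0⟩ := exists_isAdmissible hf0 hG0
  obtain ⟨m1, B1, h1⟩ := exists_isAdmissible hf1 hG1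
  have hm : 0 < min m0 m1 := lt_min h0.pos h1.pos
  exact ⟨min m0 m1, max B0 B1, h0.mono hm (min_le_left _ _) (le_max_left _ _),
    h1.mono hm (min_le_right _ _) (le_max_right _ _)⟩

theorem Omg_eq_inv_sqrt_relHessian (hf0 : ContDiff ℝ 2 f0) (hf1 : ContDiff ℝ 2 f1)
    (hα : α ∈ Icc (0 : ℝ) 1) :
    Omg f0 f1 t α = (√(relHessian (interpolant f0 f1 t) α))⁻¹ := by
  by_cases h : α = 0 ∨ α = 1
  · rcases h with rfl | rfl <;> simp [Omg, relHessian]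
  · have hα0 : 0 < α := hα.1.lt_of_ne' fun h0 => h (.inl h0)
    have hα1 : 0 < 1 - α := sub_pos.2 (hα.2.lt_of_ne fun h1 => h (.inr h1))
    rw [Omg, if_neg h, Gt_eq_GP_add_interpolant, iteratedDeriv_two_GP,
      iteratedDeriv_two_GP_add (contDiff_interpolant hf0 hf1 t) ⟨hα0, sub_pos.1 hα1⟩,
      div_div_div_cancel_right₀ (mul_pos hα0 hα1).ne', one_div, ← Real.sqrt_eq_rpow, Real.sqrt_inv]

theorem Qnorm_GP_add (hα : α ∈ Icc (0 : ℝ) 1) (f : ℝ → ℝ) (N : ℕ) :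
    Qnorm (GP + f) N α = Qnorm GP N α * laplaceRatio f N α := by
  have hD : laplaceIntegral (Phase GP α) N ≠ 0 :=
    (laplaceIntegral_Phase_GP_pos hα (Nat.cast_nonneg N)).ne'
  simp only [Qnorm, laplaceRatio]
  change 2 * Real.pi * laplaceIntegral _ _ = 2 * Real.pi * laplaceIntegral _ _ * _
  field_simp

theorem Rcal_eq (h0 : IsAdmissible m B f0) (h1 : IsAdmissible m B f1) (hα : α ∈ Icc (0 : ℝ) 1)
    (N : ℕ) (t : ℝ) :
    Rcal f0 f1 N t α = laplaceRatio (interpolant f0 f1 t) N α /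
      (laplaceRatio f0 N α ^ (1 - t) * laplaceRatio f1 N α ^ t) := by
  have hN : (0 : ℝ) ≤ N := Nat.cast_nonneg N
  have hQ : 0 < Qnorm GP N α := mul_pos Real.two_pi_pos (laplaceIntegral_Phase_GP_pos hα hN)
  have hr0 := h0.laplaceRatio_pos hα hN
  have hr1 := h1.laplaceRatio_pos hα hN
  simp only [Rcal, Gt_eq_GP_add_interpolant, interpolant_zero, interpolant_one, Qnorm_GP_add hα]
  rw [Real.mul_rpow hQ.le hr0.le, Real.mul_rpow hQ.le hr1.le, mul_mul_mul_comm,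
    ← Real.rpow_add hQ, sub_add_cancel, Real.rpow_one, mul_div_mul_left _ _ hQ.ne']

theorem Rcal_mem_Icc (h0 : IsAdmissible m B f0) (h1 : IsAdmissible m B f1) (N : ℕ)
    (ht : t ∈ Icc (0 : ℝ) 1) (hα : α ∈ Icc (0 : ℝ) 1) :
    Rcal f0 f1 N t α ∈ Icc (1 / ((1 + B) / m)) ((1 + B) / m) := by
  have hN : (0 : ℝ) ≤ N := Nat.cast_nonneg N
  have hM : 0 < (1 + B)⁻¹ := inv_pos.2 (by linarith [h0.bound_nonneg])
  have hm : 0 ≤ m⁻¹ := inv_nonneg.2 h0.pos.le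
  have hr0 := h0.laplaceRatio_mem_Icc hα hN
  have hr1 := h1.laplaceRatio_mem_Icc hα hN
  have hrt := (h0.interpolant h1 ht).laplaceRatio_mem_Icc hα hN
  have hlow := le_rpow_mul_rpow_of_le hM hr0.1 hr1.1 ht
  have hupp := rpow_mul_rpow_le_of_le (hM.le.trans hr0.1) (hM.trans_le hr1.1) hr0.2 hr1.2 ht
  rw [Rcal_eq h0 h1 hα, one_div_div, ← inv_div_inv m, ← inv_div_inv (1 + B)]
  exact ⟨div_le_div₀ (hM.le.trans hrt.1) hrt.1 (hM.trans_le hlow) hupp,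
    div_le_div₀ hm hrt.2 hM hlow⟩

theorem tendsto_laplaceRatio_interpolant {ι : Type*} {p : Filter ι} [p.IsCountablyGenerated]
    {N : ι → ℕ} {τ β : ι → ℝ} (h0 : IsAdmissible m B f0) (h1 : IsAdmissible m B f1)
    (hτ : ∀ i, τ i ∈ Icc (0 : ℝ) 1) (hβ : ∀ i, β i ∈ Icc (0 : ℝ) 1) (hN : Tendsto N p atTop)
    (hτt : Tendsto τ p (𝓝 t)) (hβα : Tendsto β p (𝓝 α)) (hα : α ∈ Icc (0 : ℝ) 1) :
    Tendsto (fun i => laplaceRatio (interpolant f0 f1 (τ i)) (N i) (β i)) p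
      (𝓝 (Omg f0 f1 t α)) := by
  have hder {f : ℝ → ℝ} (hf : ContDiff ℝ 2 f) :
      Tendsto (fun q : ι × ℝ => iteratedDeriv 2 f q.2) (p ×ˢ 𝓝 α) (𝓝 (iteratedDeriv 2 f α)) :=
    ((hf.continuous_iteratedDeriv 2 le_rfl).tendsto α).comp tendsto_snd
  have hτ' : Tendsto (fun q : ι × ℝ => τ q.1) (p ×ˢ 𝓝 α) (𝓝 t) := hτt.comp tendsto_fst
  rw [Omg_eq_inv_sqrt_relHessian h0.contDiff h1.contDiff hα]
  refine tendsto_laplaceRatio (fun i => h0.interpolant h1 (hτ i)) hβ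
    (tendsto_natCast_atTop_atTop.comp hN) hβα hα ?_
  simp only [iteratedDeriv_two_interpolant h0.contDiff h1.contDiff]
  exact ((hτ'.const_sub 1).mul (hder h0.contDiff)).add (hτ'.mul (hder h1.contDiff))

theorem Omg_pos (h0 : IsAdmissible m B f0) (h1 : IsAdmissible m B f1)
    (ht : t ∈ Icc (0 : ℝ) 1) (hα : α ∈ Icc (0 : ℝ) 1) : 0 < Omg f0 f1 t α := by
  have h := h0.interpolant h1 ht
  rw [Omg_eq_inv_sqrt_relHessian h0.contDiff h1.contDiff hα]
  exact inv_pos.2 (Real.sqrt_pos.2 (h.pos.trans_le (h.le_relHessian α hα)))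

theorem continuous_Omg (h0 : IsAdmissible m B f0) (h1 : IsAdmissible m B f1) :
    Continuous fun x : I × I => Omg f0 f1 x.1 x.2 := by
  have hc0 := continuous_relHessian h0.contDiff
  have hc1 := continuous_relHessian h1.contDiff
  have hH : Continuous fun x : I × I => relHessian (interpolant f0 f1 x.1) x.2 := by
    simp only [relHessian_interpolant h0.contDiff h1.contDiff]
    fun_prop
  simp only [fun x : I × I => Omg_eq_inv_sqrt_relHessian h0.contDiff h1.contDiff (t := x.1) x.2.2]
  refine hH.sqrt.inv₀ fun x => (Real.sqrt_pos.2 ?_).ne'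
  exact (h0.interpolant h1 x.1.2).pos.trans_le
    ((h0.interpolant h1 x.1.2).le_relHessian x.2 x.2.2)

/-- The limit of `Rcal f0 f1 N t α` as `N → ∞`. -/
noncomputable def limRcal (f0 f1 : ℝ → ℝ) (t α : ℝ) : ℝ :=
  Omg f0 f1 t α / (Omg f0 f1 0 α ^ (1 - t) * Omg f0 f1 1 α ^ t)

theorem continuous_limRcal (h0 : IsAdmissible m B f0) (h1 : IsAdmissible m B f1) :
    Continuous fun x : I × I => limRcal f0 f1 x.1 x.2 := by
  have hΩ := continuous_Omg h0 h1
  have hs (s : I) : Continuous fun x : I × I => Omg f0 f1 s x.2 :=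
    hΩ.comp (continuous_const.prodMk continuous_snd)
  have hpos (s : I) (x : I × I) : 0 < Omg f0 f1 s x.2 := Omg_pos h0 h1 s.2 x.2.2
  have ht : Continuous fun x : I × I => (x.1 : ℝ) := by fun_prop
  exact hΩ.div (((hs 0).rpow (continuous_const.sub ht) fun x => .inl (hpos 0 x).ne').mul
    ((hs 1).rpow ht fun x => .inl (hpos 1 x).ne')) fun x =>
      (mul_pos (Real.rpow_pos_of_pos (hpos 0 x) _) (Real.rpow_pos_of_pos (hpos 1 x) _)).ne'

theorem tendsto_Rcal {ι : Type*} {p : Filter ι} [p.IsCountablyGenerated] {N : ι → ℕ}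
    {τ β : ι → ℝ} (h0 : IsAdmissible m B f0) (h1 : IsAdmissible m B f1)
    (hτ : ∀ i, τ i ∈ Icc (0 : ℝ) 1) (hβ : ∀ i, β i ∈ Icc (0 : ℝ) 1) (hN : Tendsto N p atTop)
    (hτt : Tendsto τ p (𝓝 t)) (hβα : Tendsto β p (𝓝 α)) (hα : α ∈ Icc (0 : ℝ) 1) :
    Tendsto (fun i => Rcal f0 f1 (N i) (τ i) (β i)) p (𝓝 (limRcal f0 f1 t α)) := by
  have h0I : (0 : ℝ) ∈ Icc (0 : ℝ) 1 := left_mem_Icc.2 zero_le_one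
  have h1I : (1 : ℝ) ∈ Icc (0 : ℝ) 1 := right_mem_Icc.2 zero_le_one
  have hr := tendsto_laplaceRatio_interpolant h0 h1 hτ hβ hN hτt hβα hα
  have hr0 := tendsto_laplaceRatio_interpolant h0 h1 (fun _ => h0I) hβ hN tendsto_const_nhds hβα hα
  have hr1 := tendsto_laplaceRatio_interpolant h0 h1 (fun _ => h1I) hβ hN tendsto_const_nhds hβα hα
  simp only [interpolant_zero, interpolant_one] at hr0 hr1
  have hΩ0 := Omg_pos h0 h1 h0I hα
  have hΩ1 := Omg_pos h0 h1 h1I hα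
  simp only [Rcal_eq h0 h1 (hβ _)]
  exact hr.div ((hr0.rpow (hτt.const_sub 1) (.inl hΩ0.ne')).mul (hr1.rpow hτt (.inl hΩ1.ne')))
    (mul_pos (Real.rpow_pos_of_pos hΩ0 _) (Real.rpow_pos_of_pos hΩ1 _)).ne'

theorem tendstoUniformly_Rcal (h0 : IsAdmissible m B f0) (h1 : IsAdmissible m B f1) :
    TendstoUniformly (fun (N : ℕ) (x : I × I) => Rcal f0 f1 N x.1 x.2)
      (fun x => limRcal f0 f1 x.1 x.2) atTop := by
  refine tendstoUniformly_of_forall_tendsto_prod (continuous_limRcal h0 h1) fun x => ?_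
  have ht : Tendsto (fun y : I × I => (y.1 : ℝ)) (𝓝 x) (𝓝 (x.1 : ℝ)) :=
    (continuous_subtype_val.comp continuous_fst).tendsto x
  have hα : Tendsto (fun y : I × I => (y.2 : ℝ)) (𝓝 x) (𝓝 (x.2 : ℝ)) :=
    (continuous_subtype_val.comp continuous_snd).tendsto x
  exact tendsto_Rcal h0 h1 (fun q => q.2.1.2) (fun q => q.2.2.2) tendsto_fst
    (ht.comp tendsto_snd) (hα.comp tendsto_snd) x.2.2

end Interpolation

theorem bergman_cp1_bounds_and_convergence_of_R_general
    (f0 f1 : ℝ → ℝ) (hf0 : ContDiff ℝ 2 f0) (hf1 : ContDiff ℝ 2 f1)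
    (hG0 : ∀ x ∈ Ioo (0 : ℝ) 1, 0 < iteratedDeriv 2 (Gt f0 f1 0) x)
    (hG1 : ∀ x ∈ Ioo (0 : ℝ) 1, 0 < iteratedDeriv 2 (Gt f0 f1 1) x) :
    (∃ C : ℝ, 0 < C ∧
      ∀ N : ℕ, ∀ t ∈ Icc (0 : ℝ) 1, ∀ α ∈ Icc (0 : ℝ) 1,
        1 / C ≤ Rcal f0 f1 N t α ∧ Rcal f0 f1 N t α ≤ C) ∧
    (∀ ε : ℝ, 0 < ε → ∃ N₀ : ℕ, ∀ N : ℕ, N₀ ≤ N →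
      ∀ t ∈ Icc (0 : ℝ) 1, ∀ α ∈ Icc (0 : ℝ) 1,
        |Rcal f0 f1 N t α -
          Omg f0 f1 t α / ((Omg f0 f1 0 α) ^ (1 - t) * (Omg f0 f1 1 α) ^ t)| < ε) := by
  obtain ⟨m, B, h0, h1⟩ := exists_isAdmissible_pair hf0 hf1 hG0 hG1
  refine ⟨⟨(1 + B) / m, div_pos (by linarith [h0.bound_nonneg]) h0.pos,
    fun N t ht α hα => Rcal_mem_Icc h0 h1 N ht hα⟩, fun ε hε => ?_⟩
  obtain ⟨N₀, hN₀⟩ := eventually_atTop.1 (Metric.tendstoUniformly_iff.1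
    (tendstoUniformly_Rcal h0 h1) ε hε)
  refine ⟨N₀, fun N hN t ht α hα => ?_⟩
  rw [← Real.dist_eq, dist_comm]
  exact hN₀ N hN (⟨t, ht⟩, ⟨α, hα⟩)

theorem bergman_cp1_bounds_and_convergence_of_R
    (f0 f1 : ℝ → ℝ) (hf0 : ContDiff ℝ (⊤ : ℕ∞) f0) (hf1 : ContDiff ℝ (⊤ : ℕ∞) f1)
    (hG0 : ∀ x ∈ Set.Ioo (0:ℝ) 1, 0 < iteratedDeriv 2 (Gt f0 f1 0) x)
    (hG1 : ∀ x ∈ Set.Ioo (0:ℝ) 1, 0 < iteratedDeriv 2 (Gt f0 f1 1) x) :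
    (∃ C : ℝ, 0 < C ∧
      ∀ N : ℕ, 1 ≤ N → ∀ t ∈ Set.Icc (0:ℝ) 1, ∀ α ∈ Set.Icc (0:ℝ) 1,
        1 / C ≤ Rcal f0 f1 N t α ∧ Rcal f0 f1 N t α ≤ C) ∧
    (∀ ε : ℝ, 0 < ε → ∃ N₀ : ℕ, ∀ N : ℕ, N₀ ≤ N →
      ∀ t ∈ Set.Icc (0:ℝ) 1, ∀ α ∈ Set.Icc (0:ℝ) 1,
        |Rcal f0 f1 N t α -
          Omg f0 f1 t α / ((Omg f0 f1 0 α) ^ (1 - t) * (Omg f0 f1 1 α) ^ t)| < ε) := by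
  obtain ⟨⟨C, hC, hR⟩, hlim⟩ := bergman_cp1_bounds_and_convergence_of_R_general f0 f1
    (mod_cast contDiff_infty.1 hf0 2) (mod_cast contDiff_infty.1 hf1 2) hG0 hG1
  exact ⟨⟨C, hC, fun N _ => hR N⟩, hlim⟩
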